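/- Let n ≥ 1, let Ω ⊆ ℝ^n be open, and let T : (ℝ^n → ℂ) → ℂ be ℂ-linear. Suppose that for every x ∈ Ω there exists a sequence (f_k^{(x)}) of functions, each smooth on Ω, that represents T on Ω and is asymptotically equicontinuous at x. Then there exists a continuous function g : Ω → ℂ such that g(x) = lim_{k→∞} f_k^{(x)}(x) for every x ∈ Ω and T(φ) = ∫_Ω g φ for every test function φ on Ω. (Sequential form of Loeb's theorem: if a predistribution admits a Robinson value at every point of Ω, the resulting pointwise value function is continuous and represents the predistribution, which is therefore a regular Schwartz distribution.) -/

import Mathlib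

open MeasureTheory Filter Metric Topology

noncomputable section

/-- A test function on an open set `U ⊆ ℝⁿ`: a smooth function `ℝⁿ → ℂ` whose
support is compact and contained in `U`. -/
def IsTestFunction {n : ℕ} (U : Set (EuclideanSpace ℝ (Fin n)))
    (φ : EuclideanSpace ℝ (Fin n) → ℂ) : Prop :=
  ContDiff ℝ (⊤ : ℕ∞) φ ∧ HasCompactSupport φ ∧ tsupport φ ⊆ U

/-- A sequence `f k` of functions represents the linear map `T` on `U` if
`∫_U (f k) φ → T φ` for every test function `φ` on `U`. -/
def Represents {n : ℕ} (U : Set (EuclideanSpace ℝ (Fin n)))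
    (T : (EuclideanSpace ℝ (Fin n) → ℂ) → ℂ)
    (f : ℕ → EuclideanSpace ℝ (Fin n) → ℂ) : Prop :=
  ∀ φ : EuclideanSpace ℝ (Fin n) → ℂ, IsTestFunction U φ →
    Tendsto (fun k => ∫ x in U, f k x * φ x) atTop (𝓝 (T φ))

/-- A sequence `f k` is asymptotically equicontinuous at `x0`: for every `ε > 0` there
is `r > 0` with `B(x0,r) ⊆ U` such that
`limsup_k sup_{x ∈ B(x0,r)} ‖f k x - f k x0‖ ≤ ε`, i.e. eventually in `k` we have
`‖f k x - f k x0‖ ≤ ε` for all `x ∈ B(x0,r)`. -/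
def AsympEquicontAt {n : ℕ} (U : Set (EuclideanSpace ℝ (Fin n)))
    (f : ℕ → EuclideanSpace ℝ (Fin n) → ℂ) (x0 : EuclideanSpace ℝ (Fin n)) : Prop :=
  ∀ ε : ℝ, 0 < ε → ∃ r : ℝ, 0 < r ∧ ball x0 r ⊆ U ∧
    ∀ᶠ k in atTop, ∀ x ∈ ball x0 r, ‖f k x - f k x0‖ ≤ ε

/-- A strict delta sequence: smooth compactly supported `ψ k` with `∫ ψ k = 1`,
`supp ψ k ⊆ B(0, r k)` with `r k → 0`, and `sup_k ∫ ‖ψ k‖ < ∞`. -/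
def StrictDeltaSeq {n : ℕ} (ψ : ℕ → EuclideanSpace ℝ (Fin n) → ℂ) : Prop :=
  (∀ k, ContDiff ℝ (⊤ : ℕ∞) (ψ k) ∧ HasCompactSupport (ψ k)) ∧
  (∀ k, ∫ x, ψ k x = 1) ∧
  (∃ r : ℕ → ℝ, Tendsto r atTop (𝓝 0) ∧
    ∀ k, tsupport (ψ k) ⊆ ball (0 : EuclideanSpace ℝ (Fin n)) (r k)) ∧
  (∃ C : ℝ, ∀ k, (∫ x, ‖ψ k x‖) ≤ C)

theorem aux_integrable {n : ℕ} {Ω : Set (EuclideanSpace ℝ (Fin n))}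
    {h φ : EuclideanSpace ℝ (Fin n) → ℂ} (hh : ContinuousOn h Ω) (hφ : IsTestFunction Ω φ) :
    Integrable (fun x => h x * φ x) := by
  have h1 : IntegrableOn (fun x => h x * φ x) (tsupport φ) :=
    ((hh.mono hφ.2.2).mul hφ.1.continuous.continuousOn).integrableOn_compact hφ.2.1
  refine (integrableOn_iff_integrable_of_support_subset ?_).1 h1
  intro x hx
  apply subset_tsupport φ
  intro h0
  exact hx (by simp [h0])

theorem aux_setIntegral {n : ℕ} {Ω : Set (EuclideanSpace ℝ (Fin n))}
    {h φ : EuclideanSpace ℝ (Fin n) → ℂ} (hφ : IsTestFunction Ω φ) :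
    ∫ x in Ω, h x * φ x = ∫ x, h x * φ x := by
  refine setIntegral_eq_integral_of_forall_compl_eq_zero ?_
  intro x hx
  have : φ x = 0 := by
    by_contra h0
    exact hx (hφ.2.2 (subset_tsupport φ h0))
  simp [this]

theorem aux_int {n : ℕ} {Ω : Set (EuclideanSpace ℝ (Fin n))}
    {φ : EuclideanSpace ℝ (Fin n) → ℂ} (hφ : IsTestFunction Ω φ) : Integrable φ :=
  hφ.1.continuous.integrable_of_hasCompactSupport hφ.2.1

theorem aux_est {n : ℕ} {Ω B : Set (EuclideanSpace ℝ (Fin n))} (hB : B ⊆ Ω)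
    {h φ : EuclideanSpace ℝ (Fin n) → ℂ} (hh : ContinuousOn h Ω) (hφ : IsTestFunction B φ)
    {c : ℂ} {ε : ℝ} (hε : ∀ y ∈ B, ‖h y - c‖ ≤ ε) :
    ‖(∫ x in Ω, h x * φ x) - c * ∫ x, φ x‖ ≤ ε * ∫ x, ‖φ x‖ := by
  have hφ' : IsTestFunction Ω φ := ⟨hφ.1, hφ.2.1, hφ.2.2.trans hB⟩
  rw [aux_setIntegral hφ', ← integral_const_mul,
    ← integral_sub (aux_integrable hh hφ') ((aux_int hφ).const_mul c), ← integral_const_mul]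
  refine norm_integral_le_of_norm_le ((aux_int hφ).norm.const_mul ε) (Eventually.of_forall ?_)
  intro x
  by_cases hx : x ∈ B
  · have : h x * φ x - c * φ x = (h x - c) * φ x := by ring
    simp only [this, norm_mul]
    exact mul_le_mul_of_nonneg_right (hε x hx) (norm_nonneg _)
  · have : φ x = 0 := by
      by_contra h0
      exact hx (hφ.2.2 (subset_tsupport φ h0))
    simp [this]

theorem aux_bump {n : ℕ} (x : EuclideanSpace ℝ (Fin n)) {B : Set (EuclideanSpace ℝ (Fin n))}
    (hB : B ∈ 𝓝 x) : ∃ φ : EuclideanSpace ℝ (Fin n) → ℂ, IsTestFunction B φ ∧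
      ∫ y, φ y = 1 ∧ ∫ y, ‖φ y‖ = 1 := by
  obtain ⟨r, hr, hrB⟩ := Metric.mem_nhds_iff.1 hB
  let b : ContDiffBump x := ⟨r / 4, r / 2, by positivity, by linarith⟩
  have hts : tsupport (fun y => ((b.normed volume y : ℝ) : ℂ)) ⊆ closedBall x (r / 2) := by
    rw [← b.tsupport_normed_eq (μ := volume)]
    exact closure_mono (fun y hy h0 => hy (by simp [h0]))
  refine ⟨fun y => ((b.normed volume y : ℝ) : ℂ), ⟨?_, ?_, ?_⟩, ?_, ?_⟩
  · exact Complex.ofRealCLM.contDiff.comp b.contDiff_normed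
  · exact (isCompact_closedBall x (r / 2)).of_isClosed_subset (isClosed_tsupport _) hts
  · exact hts.trans ((closedBall_subset_ball (by linarith)).trans hrB)
  · rw [integral_complex_ofReal, b.integral_normed]; simp
  · simp only [Complex.norm_real, Real.norm_eq_abs, abs_of_nonneg (b.nonneg_normed _)]
    exact b.integral_normed

theorem aux_point {n : ℕ} {Ω : Set (EuclideanSpace ℝ (Fin n))}
    {T : (EuclideanSpace ℝ (Fin n) → ℂ) → ℂ} {f : ℕ → EuclideanSpace ℝ (Fin n) → ℂ}
    {x : EuclideanSpace ℝ (Fin n)} (hf : ∀ k, ContinuousOn (f k) Ω)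
    (hR : Represents Ω T f) (hA : AsympEquicontAt Ω f x) :
    ∃ c : ℂ, Tendsto (fun k => f k x) atTop (𝓝 c) ∧ ∀ ε : ℝ, 0 < ε → ∃ r : ℝ, 0 < r ∧
      ball x r ⊆ Ω ∧ ∀ φ, IsTestFunction (ball x r) φ →
        ‖T φ - c * ∫ y, φ y‖ ≤ ε * ∫ y, ‖φ y‖ := by
  have hc : CauchySeq (fun k => f k x) := by
    refine Metric.cauchySeq_iff'.2 fun ε hε => ?_
    obtain ⟨r, hr, hrΩ, he⟩ := hA (ε / 5) (by positivity)
    obtain ⟨φ, hφ, h1, h2⟩ := aux_bump x (ball_mem_nhds x hr)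
    have ht := Metric.tendsto_nhds.1 (hR φ ⟨hφ.1, hφ.2.1, hφ.2.2.trans hrΩ⟩) (ε / 5) (by positivity)
    obtain ⟨N, hN⟩ := eventually_atTop.1 (he.and ht)
    have key : ∀ k ≥ N, dist (f k x) (T φ) ≤ 2 * ε / 5 := by
      intro k hk
      have a := aux_est hrΩ (hf k) hφ (hN k hk).1
      rw [h1, h2, mul_one, mul_one, ← dist_eq_norm, dist_comm] at a
      linarith [(hN k hk).2, dist_triangle (f k x) (∫ x in Ω, f k x * φ x) (T φ)]
    refine ⟨N, fun k hk => ?_⟩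
    linarith [key k hk, key N le_rfl, dist_triangle_right (f k x) (f N x) (T φ)]
  obtain ⟨c, hc⟩ := cauchySeq_tendsto_of_complete hc
  refine ⟨c, hc, fun ε hε => ?_⟩
  obtain ⟨r, hr, hrΩ, he⟩ := hA ε hε
  refine ⟨r, hr, hrΩ, fun φ hφ => ?_⟩
  have ht := hR φ ⟨hφ.1, hφ.2.1, hφ.2.2.trans hrΩ⟩
  refine le_of_tendsto (ht.sub (hc.mul_const (∫ y, φ y))).norm ?_
  filter_upwards [he] with k hk
  exact aux_est hrΩ (hf k) hφ hk

open scoped Manifold ContDiff in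
theorem aux_pou {n : ℕ} {Ω : Set (EuclideanSpace ℝ (Fin n))}
    {φ : EuclideanSpace ℝ (Fin n) → ℂ} (hφ : IsTestFunction Ω φ)
    (U : EuclideanSpace ℝ (Fin n) → Set (EuclideanSpace ℝ (Fin n)))
    (hU : ∀ x ∈ Ω, IsOpen (U x) ∧ x ∈ U x) :
    ∃ (t : Finset (EuclideanSpace ℝ (Fin n)))
      (χ : t → EuclideanSpace ℝ (Fin n) → ℂ), (∀ i : t, (i : EuclideanSpace ℝ (Fin n)) ∈ Ω) ∧
      (∀ i : t, IsTestFunction (U i) (χ i)) ∧ φ = ∑ i, χ i ∧ ∀ x, ∑ i, ‖χ i x‖ = ‖φ x‖ := by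
  have hK : IsCompact (tsupport φ) := hφ.2.1
  obtain ⟨t, ht, hcov⟩ := hK.elim_nhds_subcover U
    (fun x hx => (hU x (hφ.2.2 hx)).1.mem_nhds (hU x (hφ.2.2 hx)).2)
  obtain ⟨p, hp⟩ := SmoothPartitionOfUnity.exists_isSubordinate
    𝓘(ℝ, EuclideanSpace ℝ (Fin n)) (isClosed_tsupport φ) (fun i : t => U i)
    (fun i => (hU i (hφ.2.2 (ht i i.2))).1)
    (by intro x hx; simpa using hcov hx)
  have hsum : ∀ x, φ x ≠ 0 → ∑ i, p i x = 1 := by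
    intro x hx
    rw [← finsum_eq_sum_of_fintype]
    exact p.sum_eq_one (subset_tsupport φ hx)
  refine ⟨t, fun i x => ((p i x : ℝ) : ℂ) * φ x, fun i => hφ.2.2 (ht i i.2), fun i => ⟨?_, ?_, ?_⟩,
    ?_, ?_⟩
  · exact (Complex.ofRealCLM.contDiff.comp (p i).contMDiff.contDiff).mul hφ.1
  · exact hφ.2.1.mul_left
  · refine (closure_mono ?_).trans (hp i)
    intro x hx h0
    exact hx (by simp [h0])
  · funext x
    rw [Finset.sum_apply, ← Finset.sum_mul]
    by_cases hx : φ x = 0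
    · simp [hx]
    · rw [← Complex.ofReal_sum, hsum x hx]; simp
  · intro x
    simp only [norm_mul, Complex.norm_real, Real.norm_eq_abs, abs_of_nonneg (p.nonneg _ x)]
    rw [← Finset.sum_mul]
    by_cases hx : φ x = 0
    · simp [hx]
    · rw [hsum x hx]; simp

/-- Sequential form of Loeb's theorem: if for every `x ∈ Ω` the predistribution `T`
admits a representing sequence `F x` asymptotically equicontinuous at `x`, then the
pointwise value function `g x = lim_k (F x) k x` is continuous on `Ω` and represents
`T`, which is therefore a regular Schwartz distribution. -/
theorem loeb_everywhere_point_values {n : ℕ} (hn : 1 ≤ n)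
    (Ω : Set (EuclideanSpace ℝ (Fin n))) (hΩ : IsOpen Ω)
    (T : (EuclideanSpace ℝ (Fin n) → ℂ) → ℂ) (hT : IsLinearMap ℂ T)
    (F : EuclideanSpace ℝ (Fin n) → ℕ → EuclideanSpace ℝ (Fin n) → ℂ)
    (hF : ∀ x ∈ Ω, (∀ k, ContDiffOn ℝ (⊤ : ℕ∞) (F x k) Ω) ∧
      Represents Ω T (F x) ∧ AsympEquicontAt Ω (F x) x) :
    ∃ g : EuclideanSpace ℝ (Fin n) → ℂ, ContinuousOn g Ω ∧
      (∀ x ∈ Ω, Tendsto (fun k => F x k x) atTop (𝓝 (g x))) ∧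
      (∀ φ : EuclideanSpace ℝ (Fin n) → ℂ, IsTestFunction Ω φ →
        T φ = ∫ x in Ω, g x * φ x) := by
  have hpt : ∀ x : EuclideanSpace ℝ (Fin n), ∃ c : ℂ, x ∈ Ω →
      (Tendsto (fun k => F x k x) atTop (𝓝 c) ∧ ∀ ε : ℝ, 0 < ε → ∃ r : ℝ, 0 < r ∧
      ball x r ⊆ Ω ∧ ∀ φ, IsTestFunction (ball x r) φ →
        ‖T φ - c * ∫ y, φ y‖ ≤ ε * ∫ y, ‖φ y‖) := by
    intro x
    by_cases hx : x ∈ Ω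
    · obtain ⟨h1, h2, h3⟩ := hF x hx
      obtain ⟨c, hc⟩ := aux_point (fun k => (h1 k).continuousOn) h2 h3
      exact ⟨c, fun _ => hc⟩
    · exact ⟨0, fun h => absurd h hx⟩
  choose g hg using hpt
  have hloc : ∀ x : EuclideanSpace ℝ (Fin n), ∀ ε : ℝ, 0 < ε → ∃ r : ℝ, x ∈ Ω → (0 < r ∧
      ball x r ⊆ Ω ∧ (∀ φ, IsTestFunction (ball x r) φ →
        ‖T φ - g x * ∫ y, φ y‖ ≤ ε * ∫ y, ‖φ y‖) ∧ ∀ y ∈ ball x r, ‖g y - g x‖ ≤ 2 * ε) := by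
    intro x ε hε
    by_cases hx : x ∈ Ω
    swap
    · exact ⟨0, fun h => absurd h hx⟩
    obtain ⟨r, hr, hrΩ, H⟩ := (hg x hx).2 ε hε
    refine ⟨r, fun _ => ⟨hr, hrΩ, H, fun y hy => ?_⟩⟩
    obtain ⟨s, hs, hsΩ, H'⟩ := (hg y (hrΩ hy)).2 ε hε
    obtain ⟨φ, hφ, h1, h2⟩ := aux_bump y
      (inter_mem (isOpen_ball.mem_nhds hy) (ball_mem_nhds y hs))
    have a := H φ ⟨hφ.1, hφ.2.1, hφ.2.2.trans Set.inter_subset_left⟩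
    have b := H' φ ⟨hφ.1, hφ.2.1, hφ.2.2.trans Set.inter_subset_right⟩
    rw [h1, h2, mul_one, mul_one] at a b
    have e : g y - g x = (T φ - g x) - (T φ - g y) := by ring
    rw [e]
    linarith [norm_sub_le (T φ - g x) (T φ - g y)]
  have hcont : ContinuousOn g Ω := by
    intro x hx
    refine ContinuousAt.continuousWithinAt (Metric.continuousAt_iff.2 fun ε hε => ?_)
    obtain ⟨r, h⟩ := hloc x (ε / 3) (by positivity)
    obtain ⟨hr, -, -, h⟩ := h hx
    refine ⟨r, hr, fun y hy => ?_⟩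
    rw [dist_eq_norm]
    linarith [h y hy]
  refine ⟨g, hcont, fun x hx => (hg x hx).1, fun φ hφ => ?_⟩
  have main : ∀ ε : ℝ, 0 < ε → ‖T φ - ∫ x in Ω, g x * φ x‖ ≤ ε * (3 * ∫ x, ‖φ x‖) := by
    intro ε hε
    choose r hr using fun x => hloc x ε hε
    obtain ⟨t, χ, htΩ, hχ, hsum, hnorm⟩ := aux_pou hφ (fun x => ball x (r x))
      (fun x hx => ⟨isOpen_ball, mem_ball_self (hr x hx).1⟩)
    have hχΩ : ∀ i, IsTestFunction Ω (χ i) := fun i =>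
      ⟨(hχ i).1, (hχ i).2.1, (hχ i).2.2.trans (hr i (htΩ i)).2.1⟩
    have hTs : T φ = ∑ i, T (χ i) := by
      rw [hsum]
      exact map_sum (IsLinearMap.mk' T hT) χ Finset.univ
    have hIs : ∫ x in Ω, g x * φ x = ∑ i, ∫ x in Ω, g x * χ i x := by
      rw [← integral_finsetSum _ (fun i _ => (aux_integrable hcont (hχΩ i)).integrableOn)]
      congr 1
      funext x
      rw [hsum, Finset.sum_apply, Finset.mul_sum]
    have hNs : ∫ x, ‖φ x‖ = ∑ i, ∫ x, ‖χ i x‖ := by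
      rw [← integral_finsetSum _ (fun i _ => (aux_int (hχΩ i)).norm)]
      congr 1
      funext x
      rw [hnorm]
    rw [hTs, hIs, hNs, ← Finset.sum_sub_distrib, Finset.mul_sum, Finset.mul_sum]
    refine norm_sum_le_of_le _ fun i _ => ?_
    obtain ⟨-, h1, h2, h3⟩ := hr i (htΩ i)
    have a := h2 _ (hχ i)
    have b := aux_est h1 hcont (hχ i) h3
    have e : T (χ i) - ∫ x in Ω, g x * χ i x = (T (χ i) - g i * ∫ y, χ i y)
      - ((∫ x in Ω, g x * χ i x) - g i * ∫ y, χ i y) := by ring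
    rw [e]
    refine (norm_sub_le _ _).trans ?_
    linarith
  have hlim : Tendsto (fun ε : ℝ => ε * (3 * ∫ x, ‖φ x‖)) (𝓝[>] 0) (𝓝 0) := by
    have : Tendsto (fun ε : ℝ => ε * (3 * ∫ x, ‖φ x‖)) (𝓝 0) (𝓝 (0 * (3 * ∫ x, ‖φ x‖))) :=
      tendsto_id.mul_const _
    rw [zero_mul] at this
    exact this.mono_left nhdsWithin_le_nhds
  have h0 : ‖T φ - ∫ x in Ω, g x * φ x‖ ≤ 0 :=
    ge_of_tendsto hlim (by filter_upwards [self_mem_nhdsWithin] with ε hε using main ε hε)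
  exact sub_eq_zero.1 (norm_le_zero_iff.1 h0)
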